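/- arXiv:2012.14317 — 2 statements merged into one kernel-verified Lean document; each statement's English description precedes it below -/
import Mathlib

section
/- If λ₂(G_T) ≤ 1/d for every T ∈ 𝒞(d−2), and λ₂(G_S) < 1 for every face S with |S| ≤ d−2, then for every 2 ≤ k ≤ d, λ₂(P_k^∨) ≤ 1 − 1/k². -/
/-!
The proof combines Oppenheim's trickle-down theorem with the local-to-global induction of
Alev and Lau. All measures are replaced by the unnormalised weight `w = wgt C d pid`, which
vanishes off `C` and satisfies `∑_{i ∉ S} w (S ∪ {i}) = (d - |S|) w S`; only this balance
property (`IsBalanced`) and nonnegativity are used once the hypotheses have been translated.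

*Trickle-down* (`LocalBound.trickle`). Averaging the local bounds at the faces `S ∪ {a}` gives
`G ≤ γ + (1 - γ) G²` for `G = G_S` on functions of mean zero, that is
`(1 - G) (γ - (1 - γ) G) ≥ 0`. Since the spectrum of `G` on mean-zero functions is bounded away
from `1`, it lies below `γ / (1 - γ)`. Starting from `1 / d` at level `d - 2`, this yields
`λ₂(G_S) ≤ 1 / (|S| + 2)` for all faces with `|S| ≤ d - 2` (`localBound_all`). No eigenvectors
are needed: `spectral_improve` shows that any valid upper bound in `(γ / (1 - γ), 1)` can be
strictly lowered, and `spectral_trickle` applies this to the infimum of the valid bounds.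

*Local to global* (`levelBound_succ`). Let `U` be the up operator and `D` its adjoint. For `g` of
mean zero on level `k + 1`, expanding `‖D g‖²` gives a diagonal part and an off-diagonal part; the
latter is a sum over `R ∈ C(k)` of quadratic forms of local walks `G_R`, hence is controlled by
`‖g‖²` and `‖U g‖²`, and `‖U g‖²` is controlled by the induction hypothesis. With
`λ₂(G_R) ≤ 1 / (k + 2)` the resulting recursion for the spectral gap is
`gap (k + 2) ≥ ((k + 1) / (k + 2))² gap (k + 1)`, whose solution is `1 / k²`. Cauchy–Schwarz
transfers the bound on `D` back to `U`, and `⟨f, P_k^∨ f⟩ = ‖U f‖²`.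
-/

open Finset

noncomputable section

variable {E : Type*} [Fintype E] [DecidableEq E]

/-- The faces of cardinality `k` of the set family `C`. -/
def faces (C : Finset (Finset E)) (k : ℕ) : Finset (Finset E) :=
  C.filter fun S => S.card = k

/-- `C` is a pure simplicial complex of dimension `d`: it is nonempty, closed under
taking subsets, and every face is contained in a face of cardinality `d`
(hence all maximal faces have cardinality `d`). -/
def IsPureComplex (C : Finset (Finset E)) (d : ℕ) : Prop :=
  C.Nonempty ∧ (∀ S ∈ C, ∀ T ⊆ S, T ∈ C) ∧ (∀ S ∈ C, ∃ T ∈ C, S ⊆ T ∧ T.card = d)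

/-- `pid` is a probability distribution with full support on the top level faces. -/
def IsTopDist (C : Finset (Finset E)) (d : ℕ) (pid : Finset E → ℝ) : Prop :=
  (∀ T ∈ faces C d, 0 < pid T) ∧ ∑ T ∈ faces C d, pid T = 1

/-- The (unnormalised) weight of a face: total top-level mass above it. -/
def wgt (C : Finset (Finset E)) (d : ℕ) (pid : Finset E → ℝ) (S : Finset E) : ℝ :=
  ∑ T ∈ (faces C d).filter (fun T => S ⊆ T), pid T

/-- The distribution `π_k` at level `k`: `π_k(S) ∝ Σ_{T ∈ C(d), T ⊇ S} π_d(T)`. -/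
def piLev (C : Finset (Finset E)) (d : ℕ) (pid : Finset E → ℝ) (k : ℕ) (S : Finset E) : ℝ :=
  if S ∈ faces C k then wgt C d pid S / ∑ T ∈ faces C k, wgt C d pid T else 0

/-- The level-`k` faces of the link of the face `S`. -/
def linkFaces (C : Finset (Finset E)) (S : Finset E) (k : ℕ) : Finset (Finset E) :=
  Finset.univ.powerset.filter fun T => S ∩ T = ∅ ∧ S ∪ T ∈ C ∧ T.card = k

/-- The distribution `π_{S,k}` on the level-`k` faces of the link of `S`:
`π_{S,k}(T) ∝ π_{|S|+k}(S ∪ T)`. -/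
def linkPi (C : Finset (Finset E)) (d : ℕ) (pid : Finset E → ℝ) (S : Finset E) (k : ℕ)
    (T : Finset E) : ℝ :=
  if T ∈ linkFaces C S k then
    piLev C d pid (S.card + k) (S ∪ T) /
      ∑ T' ∈ linkFaces C S k, piLev C d pid (S.card + k) (S ∪ T')
  else 0

/-- Generic up operator with respect to a measure `ν` on a collection `dom` of faces:
from `R` move to a superset `T ∈ dom` with probability proportional to `ν T`.
Acts on functions on `dom`, producing a function on the level below. -/
def upWith (ν : Finset E → ℝ) (dom : Finset (Finset E)) (f : Finset E → ℝ) (R : Finset E) : ℝ :=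
  ∑ T ∈ dom.filter (fun T => R ⊆ T),
    (ν T / ∑ T' ∈ dom.filter (fun T' => R ⊆ T'), ν T') * f T

/-- The up operator `P_k^↑`, acting on functions on `C(k+1)` and producing a function
on `C(k)`. -/
def upOp (C : Finset (Finset E)) (d : ℕ) (pid : Finset E → ℝ) (k : ℕ) :
    (Finset E → ℝ) → Finset E → ℝ :=
  upWith (piLev C d pid (k+1)) (faces C (k+1))

/-- The down operator `P_k^↓` (uniform removal of an element), acting on functions
on `C(k-1)` and producing a function on `C(k)`. -/
def downOp (k : ℕ) (g : Finset E → ℝ) (S : Finset E) : ℝ :=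
  (1 / (k : ℝ)) * ∑ i ∈ S, g (S.erase i)

/-- The down-up walk `P_k^∨ = P_k^↓ P_{k-1}^↑` on `C(k)`, as an operator on functions. -/
def downUp (C : Finset (Finset E)) (d : ℕ) (pid : Finset E → ℝ) (k : ℕ)
    (f : Finset E → ℝ) : Finset E → ℝ :=
  downOp k (upOp C d pid (k-1) f)

/-- The up-down walk `P_k^∧ = P_k^↑ P_{k+1}^↓` on `C(k)`, as an operator on functions. -/
def upDown (C : Finset (Finset E)) (d : ℕ) (pid : Finset E → ℝ) (k : ℕ)
    (f : Finset E → ℝ) : Finset E → ℝ :=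
  upOp C d pid k (downOp (k+1) f)

/-- The up operator `P_{S,k}^↑` on the link of `S`, acting on functions on `C_S(k+1)`
and producing a function on `C_S(k)`. -/
def linkUp (C : Finset (Finset E)) (d : ℕ) (pid : Finset E → ℝ) (S : Finset E) (k : ℕ) :
    (Finset E → ℝ) → Finset E → ℝ :=
  upWith (linkPi C d pid S (k+1)) (linkFaces C S (k+1))

/-- The up-down walk `P_{S,k}^∧` on the level-`k` faces of the link of `S`. -/
def linkUpDown (C : Finset (Finset E)) (d : ℕ) (pid : Finset E → ℝ) (S : Finset E) (k : ℕ)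
    (f : Finset E → ℝ) : Finset E → ℝ :=
  linkUp C d pid S k (downOp (k+1) f)

/-- The local walk `G_S := 2 P_{S,1}^∧ - I` on the vertices of the link of `S`. -/
def localWalk (C : Finset (Finset E)) (d : ℕ) (pid : Finset E → ℝ) (S : Finset E)
    (f : Finset E → ℝ) (T : Finset E) : ℝ :=
  2 * linkUpDown C d pid S 1 f T - f T

/-- Variance of `f` with respect to the measure `μ` on `dom`. -/
def pVar (μ : Finset E → ℝ) (dom : Finset (Finset E)) (f : Finset E → ℝ) : ℝ :=
  (∑ x ∈ dom, μ x * f x ^ 2) - (∑ x ∈ dom, μ x * f x) ^ 2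

/-- Relative entropy `Ent_μ(f) = E_μ[f log f] - E_μ[f] log E_μ[f]` of `f` with respect to
the measure `μ` on `dom` (note `Real.log 0 = 0`, giving the convention `0 log 0 = 0`). -/
def pEnt (μ : Finset E → ℝ) (dom : Finset (Finset E)) (f : Finset E → ℝ) : ℝ :=
  (∑ x ∈ dom, μ x * (f x * Real.log (f x))) -
    (∑ x ∈ dom, μ x * f x) * Real.log (∑ x ∈ dom, μ x * f x)

/-- The Dirichlet form `𝔈_P(f,g) = Σ_x μ(x) f(x) ((I - P) g)(x)` of a Markov operator `P`
reversible with respect to `μ` on `dom`. -/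
def pDiri (μ : Finset E → ℝ) (dom : Finset (Finset E))
    (P : (Finset E → ℝ) → Finset E → ℝ) (f g : Finset E → ℝ) : ℝ :=
  ∑ x ∈ dom, μ x * f x * (g x - P g x)

/-- The second largest eigenvalue of a Markov operator `P` reversible with respect to the
distribution `μ` on `dom`, via the variational characterisation: the supremum of Rayleigh
quotients `⟨f, Pf⟩_μ / ⟨f, f⟩_μ` over `f` orthogonal to the constants in `L²(μ)`. -/
noncomputable def lamTwo (μ : Finset E → ℝ) (dom : Finset (Finset E))
    (P : (Finset E → ℝ) → Finset E → ℝ) : ℝ :=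
  sSup {r : ℝ | ∃ f : Finset E → ℝ,
    (∑ x ∈ dom, μ x * f x = 0) ∧ (∑ x ∈ dom, μ x * f x ^ 2 ≠ 0) ∧
    r = (∑ x ∈ dom, μ x * f x * P f x) / ∑ x ∈ dom, μ x * f x ^ 2}

/-- The modified log-Sobolev constant `ρ(P)` of a Markov operator `P` reversible with
respect to `μ` on `dom`. -/
noncomputable def mlsConst (μ : Finset E → ℝ) (dom : Finset (Finset E))
    (P : (Finset E → ℝ) → Finset E → ℝ) : ℝ :=
  sInf {r : ℝ | ∃ f : Finset E → ℝ, (∀ x ∈ dom, 0 < f x) ∧ pEnt μ dom f ≠ 0 ∧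
    r = pDiri μ dom P f (fun x => Real.log (f x)) / pEnt μ dom f}

set_option linter.unusedSectionVars false

/-! ### An abstract spectral lemma -/

/-- Let `G` be self-adjoint for the positive form `B`, with `G ≥ -1`, and suppose
`G ≤ lam + (1 - lam) G²` on the invariant subspace `K`. Then an upper bound `b` for `G` on `K`
improves by `(1 - b) ((1 - lam) b - lam) / 4`, which is positive for `lam / (1 - lam) < b < 1`.
The point is that `M = b - G` satisfies `0 ≤ M ≤ 1 + b`, hence `‖M f‖² ≤ (1 + b) ⟨f, M f⟩`, so that
`⟨f, M f⟩` cannot be too small compared with `‖f‖²`. -/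
lemma spectral_improve {V : Type*} [AddCommGroup V] [Module ℝ V]
    (B : V →ₗ[ℝ] V →ₗ[ℝ] ℝ) (G : V →ₗ[ℝ] V) (K : Submodule ℝ V)
    (hBsymm : ∀ f g, B f g = B g f) (hBpos : ∀ f, 0 ≤ B f f)
    (hG : ∀ f g, B f (G g) = B (G f) g) (hlow : ∀ f, -B f f ≤ B f (G f))
    (hK : ∀ f ∈ K, G f ∈ K) (lam : ℝ) (hl0 : 0 ≤ lam) (hl1 : lam < 1)
    (hquad : ∀ f ∈ K, B f (G f) ≤ lam * B f f + (1 - lam) * B (G f) (G f))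
    (b : ℝ) (hb0 : 0 ≤ b) (hb1 : b < 1) (hb : ∀ f ∈ K, B f (G f) ≤ b * B f f) :
    ∀ f ∈ K, B f (G f) ≤ (b - (1 - b) * ((1 - lam) * b - lam) / 4) * B f f := by
  intro f hf
  set g := b • f - G f with hg
  have hgK : g ∈ K := K.sub_mem (K.smul_mem _ hf) (hK f hf)
  have hGf : G f = b • f - g := by rw [hg]; abel
  -- Positivity of `b - G` at `f - g / (1 + b)`.
  have h1 := hb (f - (1 + b)⁻¹ • g) (K.sub_mem hf (K.smul_mem _ hgK))
  have h2 := hlow g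
  have hfg : B f (G g) = b * B f g - B g g := by
    rw [hG, hGf]; simp
  have hgf := hBsymm g f
  have h3 : B f (G f) = b * B f f - B f g := by rw [hGf]; simp
  have h4 : B g (G f) = b * B f g - B g g := by rw [hGf]; simp [hgf]
  have h5 : B (G f) (G f) = b ^ 2 * B f f - 2 * b * B f g + B g g := by
    rw [hGf]; simp [hgf]; ring
  have ha : 0 ≤ B f g := by have := hb f hf; linarith
  have hgg : B g g ≤ (1 + b) * B f g := by
    simp only [map_sub, map_smul, LinearMap.sub_apply, LinearMap.smul_apply, smul_eq_mul, hfg, h3, h4, hgf] at h1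
    have hp : 0 < 1 + b := by linarith
    set t := (1 + b)⁻¹ with ht
    have htp : 0 < t := inv_pos.mpr hp
    have e : t * (1 + b) = 1 := inv_mul_cancel₀ hp.ne'
    have h6 : 2 * t * B g g ≤ B f g + t ^ 2 * ((1 + b) * B g g) := by
      nlinarith [mul_le_mul_of_nonneg_left h2 (sq_nonneg t)]
    have h7 : t ^ 2 * ((1 + b) * B g g) = t * B g g := by
      calc _ = t * (t * (1 + b)) * B g g := by ring
        _ = _ := by rw [e]; ring
    have h8 : t * B g g ≤ B f g := by linarith
    calc B g g = (t * (1 + b)) * B g g := by rw [e, one_mul]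
      _ = (1 + b) * (t * B g g) := by ring
      _ ≤ _ := mul_le_mul_of_nonneg_left h8 hp.le
  have hq := hquad f hf
  rw [h3, h5] at hq
  rw [h3]
  have h9 : (1 - lam) * B g g ≤ 2 * B f g := by
    nlinarith [hBpos g]
  nlinarith [mul_nonneg (mul_nonneg (sub_nonneg.mpr hl1.le) hb0) ha]

/-- If `G ≤ lam + (1 - lam) G²` on `K` and the spectrum of `G` on `K` is bounded away from `1`,
then `G ≤ lam / (1 - lam)` on `K`. -/
lemma spectral_trickle {V : Type*} [AddCommGroup V] [Module ℝ V]
    (B : V →ₗ[ℝ] V →ₗ[ℝ] ℝ) (G : V →ₗ[ℝ] V) (K : Submodule ℝ V)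
    (hBsymm : ∀ f g, B f g = B g f) (hBpos : ∀ f, 0 ≤ B f f)
    (hG : ∀ f g, B f (G g) = B (G f) g) (hlow : ∀ f, -B f f ≤ B f (G f))
    (hK : ∀ f ∈ K, G f ∈ K) (lam : ℝ) (hl0 : 0 ≤ lam) (hl1 : lam < 1)
    (hquad : ∀ f ∈ K, B f (G f) ≤ lam * B f f + (1 - lam) * B (G f) (G f))
    (b : ℝ) (hb1 : b < 1) (hb : ∀ f ∈ K, B f (G f) ≤ b * B f f) :
    ∀ f ∈ K, B f (G f) ≤ lam / (1 - lam) * B f f := by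
  set r := lam / (1 - lam) with hr
  have hl : 0 < 1 - lam := by linarith
  have hr0 : 0 ≤ r := div_nonneg hl0 hl.le
  rcases le_or_gt b r with hbr | hbr
  · exact fun f hf => (hb f hf).trans (mul_le_mul_of_nonneg_right hbr (hBpos f))
  set A : Set ℝ := {x | r ≤ x ∧ ∀ f ∈ K, B f (G f) ≤ x * B f f} with hA
  have hbA : b ∈ A := ⟨hbr.le, hb⟩
  have hbdd : BddBelow A := ⟨r, fun x hx => hx.1⟩
  have hclosed : IsClosed A := by
    have : A = Set.Ici r ∩ ⋂ f ∈ K, {x | B f (G f) ≤ x * B f f} := by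
      ext x; simp [hA]
    rw [this]
    refine isClosed_Ici.inter (isClosed_biInter fun f _ => ?_)
    exact isClosed_le continuous_const (by fun_prop)
  have hmem := hclosed.csInf_mem ⟨b, hbA⟩ hbdd
  set s := sInf A with hs
  have hsb : s ≤ b := csInf_le hbdd hbA
  rcases hmem.1.eq_or_lt with h | h
  · rw [h]; exact hmem.2
  exfalso
  have himp := spectral_improve B G K hBsymm hBpos hG hlow hK lam hl0 hl1 hquad s
    (hr0.trans h.le) (by linarith) hmem.2
  have hpos : 0 < (1 - s) * ((1 - lam) * s - lam) / 4 := by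
    have : lam < (1 - lam) * s := by
      rw [hr, div_lt_iff₀ hl] at h; linarith
    have h1 : 0 < 1 - s := by linarith
    have h2 : 0 < (1 - lam) * s - lam := by linarith
    positivity
  have hin : max r (s - (1 - s) * ((1 - lam) * s - lam) / 4) ∈ A :=
    ⟨le_max_left _ _, fun f hf => (himp f hf).trans
      (mul_le_mul_of_nonneg_right (le_max_right _ _) (hBpos f))⟩
  have := csInf_le hbdd hin
  rw [← hs] at this
  rcases le_max_iff.mp this with h' | h' <;> linarith

/-- `spectral_trickle` for the Markov operator `G f i = (∑ j, W i j f j) / (c m i)` of a symmetric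
nonnegative kernel `W` with row sums `c m`, acting on functions of mean zero in `L²(m)`. -/
lemma kernel_trickle {ι : Type*} [Fintype ι] (m : ι → ℝ) (W : ι → ι → ℝ) (c : ℝ) (hc : 0 < c)
    (hm : ∀ i, 0 ≤ m i)
    (hW : ∀ i j, 0 ≤ W i j) (hsymm : ∀ i j, W i j = W j i) (hrow : ∀ i, ∑ j, W i j = c * m i)
    (lam : ℝ) (hl0 : 0 ≤ lam) (hl1 : lam < 1)
    (hquad : ∀ f : ι → ℝ, ∑ i, m i * f i = 0 → ∑ i, ∑ j, W i j * f i * f j ≤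
      c * (lam * ∑ i, m i * f i ^ 2 +
        (1 - lam) * ∑ i, m i * ((∑ j, W i j * f j) / (c * m i)) ^ 2))
    (b : ℝ) (hb1 : b < 1)
    (hb : ∀ f : ι → ℝ, ∑ i, m i * f i = 0 →
      ∑ i, ∑ j, W i j * f i * f j ≤ c * (b * ∑ i, m i * f i ^ 2)) :
    ∀ f : ι → ℝ, ∑ i, m i * f i = 0 →
      ∑ i, ∑ j, W i j * f i * f j ≤ c * (lam / (1 - lam) * ∑ i, m i * f i ^ 2) := by
  have hW0 : ∀ i j, m i = 0 → W i j = 0 := fun i j h => by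
    have := hrow i
    rw [h, mul_zero, Finset.sum_eq_zero_iff_of_nonneg (fun j _ => hW i j)] at this
    exact this j (mem_univ _)
  let B : (ι → ℝ) →ₗ[ℝ] (ι → ℝ) →ₗ[ℝ] ℝ :=
    LinearMap.mk₂ ℝ (fun f g => ∑ i, m i * f i * g i)
      (fun f f' g => by simp only [Pi.add_apply, ← sum_add_distrib]; congr! 1; ring)
      (fun a f g => by simp only [Pi.smul_apply, smul_eq_mul, mul_sum]; congr! 1; ring)
      (fun f g g' => by simp only [Pi.add_apply, ← sum_add_distrib]; congr! 1; ring)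
      (fun a f g => by simp only [Pi.smul_apply, smul_eq_mul, mul_sum]; congr! 1; ring)
  let G : (ι → ℝ) →ₗ[ℝ] (ι → ℝ) :=
    { toFun := fun f i => (∑ j, W i j * f j) / (c * m i)
      map_add' := fun f g => by
        ext i; simp only [Pi.add_apply, ← add_div, ← sum_add_distrib]; congr! 2; ring
      map_smul' := fun a f => by
        ext i
        simp only [Pi.smul_apply, smul_eq_mul, RingHom.id_apply, ← mul_div_assoc, mul_sum]
        congr! 2; ring }
  -- The functions of mean zero.
  let K : Submodule ℝ (ι → ℝ) :=
    { carrier := {f | ∑ i, m i * f i = 0}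
      add_mem' := fun {f g} hf hg => by
        simp only [Set.mem_ofPred_eq, Pi.add_apply, mul_add, sum_add_distrib] at *
        rw [hf, hg, add_zero]
      zero_mem' := by simp
      smul_mem' := fun a f hf => by
        simp only [Set.mem_ofPred_eq, Pi.smul_apply, smul_eq_mul] at *
        simp only [mul_left_comm _ a, ← mul_sum, hf, mul_zero] }
  have hBd : ∀ f g, B f g = ∑ i, m i * f i * g i := fun f g => rfl
  have hBB : ∀ f, B f f = ∑ i, m i * f i ^ 2 := fun f => by
    rw [hBd]; congr! 1; ring
  have hmG : ∀ f i, c * (m i * G f i) = ∑ j, W i j * f j := fun f i => by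
    change c * (m i * ((∑ j, W i j * f j) / (c * m i))) = _
    rcases eq_or_ne (m i) 0 with h | h
    · simp [h, hW0 i _ h]
    · field_simp
  have hBG : ∀ f g, c * B f (G g) = ∑ i, ∑ j, W i j * f i * g j := fun f g => by
    rw [hBd, mul_sum]
    refine sum_congr rfl fun i _ => ?_
    calc _ = f i * (c * (m i * G g i)) := by ring
      _ = _ := by rw [hmG, mul_sum]; congr! 1; ring
  have hBsymm : ∀ f g, B f g = B g f := fun f g => by
    rw [hBd, hBd]; congr! 1; ring
  have hcan : ∀ {x y : ℝ}, c * x ≤ c * y ↔ x ≤ y := fun {x y} => mul_le_mul_iff_right₀ hc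
  have hkey := spectral_trickle B G K hBsymm
    (fun f => by rw [hBB]; exact sum_nonneg fun i _ => mul_nonneg (hm i) (sq_nonneg _))
    (fun f g => by
      apply mul_left_cancel₀ hc.ne'
      rw [hBsymm (G f), hBG, hBG, sum_comm]
      congr! 2 with i _ j _
      rw [hsymm]; ring)
    (fun f => by
      -- `G ≥ -1` because `∑ W i j (f i + f j)² ≥ 0`.
      have h0 : 0 ≤ ∑ i, ∑ j, W i j * (f i + f j) ^ 2 :=
        sum_nonneg fun i _ => sum_nonneg fun j _ => mul_nonneg (hW i j) (sq_nonneg _)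
      have e1 : ∑ i, ∑ j, W i j * f i ^ 2 = c * B f f := by
        rw [hBB, mul_sum]
        refine sum_congr rfl fun i _ => ?_
        rw [← sum_mul, hrow]; ring
      have e2 : ∑ i, ∑ j, W i j * f j ^ 2 = c * B f f := by
        rw [← e1, sum_comm]; congr! 2 with i _ j _; rw [hsymm]
      have e3 : ∑ i, ∑ j, W i j * (f i + f j) ^ 2 = c * B f f + c * B f f + 2 * (c * B f (G f)) := by
        rw [hBG]
        nth_rewrite 1 [← e1]
        rw [← e2]
        simp only [mul_sum, ← sum_add_distrib]
        congr! 2; ring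
      rw [e3] at h0
      rw [← hcan]; linarith)
    (fun f hf => by
      change ∑ i, m i * G f i = 0
      have hf' : ∑ i, m i * f i = 0 := hf
      apply (mul_eq_zero.mp _).resolve_left hc.ne'
      rw [mul_sum]
      simp only [hmG]
      rw [sum_comm]
      simp only [← sum_mul, fun j i => hsymm i j, hrow]
      simp only [mul_assoc, ← mul_sum, hf', mul_zero])
    lam hl0 hl1
    (fun f hf => by
      have := hquad f hf
      rw [← hBG, hcan] at this
      rw [hBB, hBB]; exact this)
    b hb1
    (fun f hf => by
      have := hb f hf
      rw [← hBG, hcan] at this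
      rw [hBB]; exact this)
  intro f hf
  have := hkey f hf
  rw [← hBG, hcan, ← hBB]; exact this


/-! ### Local walks of a balanced weight and the trickle-down theorem -/

section weights

/-- A nonnegative weight on finite sets such that the weights of the sets covering `S` add up to
`(d - |S|) w S`. The weight `wgt` of a pure complex of dimension `d` has this property. -/
structure IsBalanced (d : ℕ) (w : Finset E → ℝ) : Prop where
  nonneg : ∀ S, 0 ≤ w S
  sum_insert : ∀ S, ∑ i ∈ Sᶜ, w (insert i S) = ((d : ℝ) - S.card) * w S

/-- The weight `w (S ∪ {i})` of the vertex `i` in the link of `S`, and `0` if `i ∈ S`. -/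
def linkVert (w : Finset E → ℝ) (S : Finset E) (i : E) : ℝ :=
  if i ∈ S then 0 else w (insert i S)

/-- The weight `w (S ∪ {i, j})` of the edge `{i, j}` in the link of `S`, and `0` if `i`, `j` are
equal or one of them lies in `S` (see `linkEdge_eq`). -/
def linkEdge (w : Finset E → ℝ) (S : Finset E) (i j : E) : ℝ :=
  if i ∈ S then 0 else linkVert w (insert i S) j

/-- The local walk at `S` has second eigenvalue at most `γ`, as an inequality between quadratic
forms on functions of mean zero. The factor `d - |S| - 1` is the ratio between the row sums of
`linkEdge` and `linkVert`, so for a set `S` of weight zero the bound is void. -/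
def LocalBound (d : ℕ) (w : Finset E → ℝ) (S : Finset E) (γ : ℝ) : Prop :=
  ∀ f : E → ℝ, ∑ i, linkVert w S i * f i = 0 →
    ∑ i, ∑ j, linkEdge w S i j * f i * f j ≤
      ((d : ℝ) - S.card - 1) * (γ * ∑ i, linkVert w S i * f i ^ 2)

variable {d : ℕ} {w : Finset E → ℝ}

lemma sum_linkVert_mul (S : Finset E) (f : E → ℝ) :
    ∑ i, linkVert w S i * f i = ∑ i ∈ Sᶜ, w (insert i S) * f i := by
  rw [← sum_filter_add_sum_filter_not univ (· ∈ S)]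
  rw [sum_eq_zero (fun i hi => by simp [linkVert, (mem_filter.mp hi).2]), zero_add]
  have : univ.filter (fun i => ¬ i ∈ S) = Sᶜ := by ext; simp
  rw [this]
  exact sum_congr rfl fun i hi => by simp [linkVert, mem_compl.mp hi]

lemma sum_linkVert (hw : IsBalanced d w) (S : Finset E) :
    ∑ i, linkVert w S i = ((d : ℝ) - S.card) * w S := by
  rw [← hw.sum_insert]
  simpa using sum_linkVert_mul (w := w) S (fun _ => 1)

lemma linkVert_nonneg (hw : IsBalanced d w) (S : Finset E) (i : E) : 0 ≤ linkVert w S i := by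
  unfold linkVert; split_ifs
  · rfl
  · exact hw.nonneg _

lemma linkEdge_nonneg (hw : IsBalanced d w) (S : Finset E) (i j : E) : 0 ≤ linkEdge w S i j := by
  unfold linkEdge; split_ifs
  · rfl
  · exact linkVert_nonneg hw _ _

lemma linkEdge_eq (S : Finset E) (i j : E) : linkEdge w S i j =
    if i ∈ S ∨ j ∈ S ∨ i = j then 0 else w (insert i (insert j S)) := by
  unfold linkEdge linkVert
  rw [insert_comm]
  by_cases h1 : i ∈ S <;> by_cases h2 : j ∈ S <;> by_cases h3 : i = j <;> simp_all [eq_comm]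

lemma linkEdge_symm (S : Finset E) (i j : E) : linkEdge w S i j = linkEdge w S j i := by
  rw [linkEdge_eq, linkEdge_eq, insert_comm]
  congr 1
  simp only [eq_iff_iff, eq_comm (a := i)]; tauto

lemma sum_linkEdge (hw : IsBalanced d w) (S : Finset E) (i : E) :
    ∑ j, linkEdge w S i j = ((d : ℝ) - S.card - 1) * linkVert w S i := by
  by_cases h : i ∈ S
  · simp [linkEdge, linkVert, h]
  · simp only [linkEdge, h, if_false, sum_linkVert hw, card_insert_of_notMem h]
    rw [linkVert, if_neg h]
    push_cast; ring

/-- An edge weight of the link of `S` is, up to a factor, the sum of the weights of the same edge in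
the links of all `S ∪ {a}`. -/
lemma sum_linkEdge_insert (hw : IsBalanced d w) (S : Finset E) (i j : E) :
    ∑ a, (if a ∈ S then 0 else linkEdge w (insert a S) i j) =
      ((d : ℝ) - S.card - 2) * linkEdge w S i j := by
  by_cases h : i ∈ S ∨ j ∈ S ∨ i = j
  · rw [linkEdge_eq, if_pos h, mul_zero]
    refine sum_eq_zero fun a _ => ?_
    have h' : i ∈ insert a S ∨ j ∈ insert a S ∨ i = j := by simp only [mem_insert]; tauto
    rw [linkEdge_eq, if_pos h', ite_self]
  · have hc : (insert i (insert j S)).card = S.card + 2 := by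
      rw [card_insert_of_notMem (by simp only [mem_insert]; tauto),
        card_insert_of_notMem (by tauto)]
    have := sum_linkVert hw (insert i (insert j S))
    rw [hc] at this
    rw [linkEdge_eq, if_neg h]
    push_cast at this
    rw [sub_sub, ← this]
    refine sum_congr rfl fun a _ => ?_
    rw [linkEdge_eq, linkVert]
    have e : insert i (insert j (insert a S)) = insert a (insert i (insert j S)) := by
      ext; simp only [mem_insert]; tauto
    rw [e]
    push Not at h
    by_cases h1 : a ∈ S <;> by_cases h2 : a = i <;> by_cases h3 : a = j <;> simp_all [eq_comm]

/-- The form of `LocalBound` for functions `f` whose mean is not zero: the projection of `f` to the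
constants is fixed by the local walk. -/
lemma LocalBound.general (hw : IsBalanced d w) {S : Finset E} {γ : ℝ}
    (h : LocalBound d w S γ) (f : E → ℝ) :
    ∑ i, ∑ j, linkEdge w S i j * f i * f j ≤
      ((d : ℝ) - S.card - 1) * (γ * ∑ i, linkVert w S i * f i ^ 2 +
        (1 - γ) * (((d : ℝ) - S.card) * w S *
          ((∑ i, linkVert w S i * f i) / (((d : ℝ) - S.card) * w S)) ^ 2)) := by
  set M := ((d : ℝ) - S.card) * w S with hM
  set c := (d : ℝ) - S.card - 1 with hc
  set u := (∑ i, linkVert w S i * f i) / M with hu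
  have hsum : ∑ i, linkVert w S i = M := sum_linkVert hw S
  have huM : ∑ i, linkVert w S i * f i = u * M := by
    rcases eq_or_ne M 0 with h0 | h0
    · rw [h0, mul_zero]
      rw [h0, sum_eq_zero_iff_of_nonneg (fun i _ => linkVert_nonneg hw S i)] at hsum
      exact sum_eq_zero fun i hi => by rw [hsum i hi, zero_mul]
    · rw [hu, div_mul_cancel₀ _ h0]
  have hrow := sum_linkEdge hw S
  have h1 : ∑ i, linkVert w S i * (f i - u) = 0 := by
    simp only [mul_sub, sum_sub_distrib, ← sum_mul, hsum, huM]; ring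
  have h2 := h _ h1
  have e1 : ∑ i, linkVert w S i * (f i - u) ^ 2 =
      ∑ i, linkVert w S i * f i ^ 2 - M * u ^ 2 := by
    have : ∀ i, linkVert w S i * (f i - u) ^ 2 = linkVert w S i * f i ^ 2
        - 2 * u * (linkVert w S i * f i) + u ^ 2 * linkVert w S i := fun i => by ring
    simp only [this, sum_sub_distrib, sum_add_distrib, ← mul_sum, hsum, huM]; ring
  have a1 : ∑ i, ∑ j, linkEdge w S i j * f i = c * (u * M) := by
    simp only [← sum_mul, hrow]
    simp only [mul_assoc, ← mul_sum, huM]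
    rfl
  have a2 : ∑ i, ∑ j, linkEdge w S i j * f j = c * (u * M) := by
    rw [← a1, sum_comm]; congr! 2; rw [linkEdge_symm]
  have a3 : ∑ i, ∑ j, linkEdge w S i j = c * M := by
    simp only [hrow, ← mul_sum, hsum]; rfl
  have e2 : ∑ i, ∑ j, linkEdge w S i j * (f i - u) * (f j - u) =
      ∑ i, ∑ j, linkEdge w S i j * f i * f j - c * M * u ^ 2 := by
    have : ∀ i j, linkEdge w S i j * (f i - u) * (f j - u) = linkEdge w S i j * f i * f j
      - u * (linkEdge w S i j * f i) - u * (linkEdge w S i j * f j) + u ^ 2 * linkEdge w S i j :=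
        fun i j => by ring
    simp only [this, sum_sub_distrib, sum_add_distrib, ← mul_sum, a1, a2, a3]; ring
  rw [e1, e2] at h2
  linarith

/-- Oppenheim's trickle-down: a bound `γ` at all `S ∪ {a}`, together with some bound `b < 1` at `S`
(connectedness), gives the bound `γ / (1 - γ)` at `S`. -/
lemma LocalBound.trickle (hw : IsBalanced d w) {S : Finset E} (hS : S.card + 3 ≤ d) {γ : ℝ}
    (h0 : 0 ≤ γ) (h1 : γ < 1)
    (h : ∀ a ∉ S, LocalBound d w (insert a S) γ) {b : ℝ} (hb1 : b < 1) (hb : LocalBound d w S b) :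
    LocalBound d w S (γ / (1 - γ)) := by
  have hS' : ((S.card : ℝ) + 3) ≤ d := by exact_mod_cast hS
  have hc : 0 < (d : ℝ) - S.card - 1 := by linarith
  have hc2 : 0 < (d : ℝ) - S.card - 2 := by linarith
  refine kernel_trickle (linkVert w S) (linkEdge w S) _ hc (linkVert_nonneg hw S)
    (linkEdge_nonneg hw S) (linkEdge_symm S) (sum_linkEdge hw S) γ h0 h1 (fun f hf => ?_) b hb1 hb
  set c := (d : ℝ) - S.card - 1 with hcdef
  set c2 := (d : ℝ) - S.card - 2 with hc2def
  -- The mean of `f` over the link of `S ∪ {a}` is `G_S f a`.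
  have key : ∀ a, (if a ∈ S then 0 else ∑ i, ∑ j, linkEdge w (insert a S) i j * f i * f j) ≤
      c2 * (γ * ∑ i, linkEdge w S a i * f i ^ 2 + (1 - γ) * (c * linkVert w S a *
        ((∑ j, linkEdge w S a j * f j) / (c * linkVert w S a)) ^ 2)) := by
    intro a
    by_cases ha : a ∈ S
    · simp [ha, linkEdge, linkVert]
    · have := (h a ha).general hw f
      rw [card_insert_of_notMem ha] at this
      simp only [ha, linkEdge, linkVert, if_false] at this ⊢
      have e1 : (d : ℝ) - (S.card + 1 : ℕ) = c := by push_cast; rw [hcdef]; ring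
      have e2 : c - 1 = c2 := by rw [hcdef, hc2def]; ring
      rw [e1, e2] at this
      exact this
  have hsum := sum_le_sum fun a (_ : a ∈ univ) => key a
  have eL : ∑ a, (if a ∈ S then 0 else ∑ i, ∑ j, linkEdge w (insert a S) i j * f i * f j) =
      c2 * ∑ i, ∑ j, linkEdge w S i j * f i * f j := by
    calc _ = ∑ a, ∑ i, ∑ j, (if a ∈ S then 0 else linkEdge w (insert a S) i j) * f i * f j := by
          congr! 1; split_ifs <;> simp
      _ = ∑ i, ∑ j, ∑ a, (if a ∈ S then 0 else linkEdge w (insert a S) i j) * f i * f j := by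
          rw [sum_comm]; congr! 1; rw [sum_comm]
      _ = _ := by
          simp only [← sum_mul, sum_linkEdge_insert hw, mul_sum]
          congr! 2; ring
  have eR : ∑ i, ∑ j, linkEdge w S i j * f j ^ 2 = c * ∑ i, linkVert w S i * f i ^ 2 := by
    rw [sum_comm, mul_sum]
    refine sum_congr rfl fun j _ => ?_
    rw [← sum_mul, sum_congr rfl fun i _ => linkEdge_symm S i j, sum_linkEdge hw, mul_assoc]
  rw [eL, ← mul_sum, mul_le_mul_iff_right₀ hc2, sum_add_distrib, ← mul_sum, eR, ← mul_sum] at hsum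
  refine hsum.trans (le_of_eq ?_)
  simp only [mul_assoc c, ← mul_sum]
  ring

/-! ### From local walks to the down-up walk -/

/-- Pairs `(T, i)` with `i ∈ T`, `|T| = k + 1`, correspond to pairs `(S, i)` with `i ∉ S`,
`|S| = k`. -/
lemma sum_level_succ (k : ℕ) (F : Finset E → E → ℝ) :
    ∑ T ∈ powersetCard (k + 1) univ, ∑ i ∈ T, F (T.erase i) i =
      ∑ S ∈ powersetCard k univ, ∑ i ∈ Sᶜ, F S i := by
  rw [sum_sigma', sum_sigma']
  refine sum_bij' (fun x _ => ⟨x.1.erase x.2, x.2⟩) (fun x _ => ⟨insert x.2 x.1, x.2⟩)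
    ?_ ?_ ?_ ?_ ?_
  · rintro ⟨T, i⟩ h
    simp only [mem_sigma, mem_powersetCard_univ] at h
    simp [card_erase_of_mem h.2, h.1]
  · rintro ⟨S, i⟩ h
    simp only [mem_sigma, mem_powersetCard_univ, mem_compl] at h
    simp [card_insert_of_notMem h.2, h.1]
  · rintro ⟨T, i⟩ h
    simp only [mem_sigma, mem_powersetCard_univ] at h
    simp [insert_erase h.2]
  · rintro ⟨S, i⟩ h
    simp only [mem_sigma, mem_powersetCard_univ, mem_compl] at h
    simp [erase_insert h.2]
  · rintro ⟨T, i⟩ h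
    rfl

/-- The up operator in unnormalised form: the `w`-weighted average of `f` over the sets covering
`S`. It is `0` where `w S = 0`. -/
def upAvg (d : ℕ) (w : Finset E → ℝ) (f : Finset E → ℝ) (S : Finset E) : ℝ :=
  (∑ i ∈ Sᶜ, w (insert i S) * f (insert i S)) / (((d : ℝ) - S.card) * w S)

lemma upAvg_mul (hw : IsBalanced d w) (f : Finset E → ℝ) (S : Finset E) :
    ((d : ℝ) - S.card) * w S * upAvg d w f S = ∑ i ∈ Sᶜ, w (insert i S) * f (insert i S) := by
  unfold upAvg
  rcases eq_or_ne (((d : ℝ) - S.card) * w S) 0 with h0 | h0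
  · have hs := hw.sum_insert S
    rw [h0, sum_eq_zero_iff_of_nonneg (fun i _ => hw.nonneg _)] at hs
    rw [h0, zero_mul, sum_eq_zero fun i hi => by rw [hs i hi, zero_mul]]
  · rw [mul_div_cancel₀ _ h0]

/-- The up operator is adjoint to the (unnormalised) down operator. -/
lemma sum_upAvg_mul (hw : IsBalanced d w) (k : ℕ) (f g : Finset E → ℝ) :
    ((d : ℝ) - k) * ∑ S ∈ powersetCard k univ, w S * upAvg d w f S * g S =
      ∑ T ∈ powersetCard (k + 1) univ, w T * f T * ∑ i ∈ T, g (T.erase i) := by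
  have := sum_level_succ (E := E) k (fun S i => w (insert i S) * f (insert i S) * g S)
  rw [mul_sum]
  symm
  calc _ = ∑ T ∈ powersetCard (k + 1) univ, ∑ i ∈ T,
        w (insert i (T.erase i)) * f (insert i (T.erase i)) * g (T.erase i) := by
        refine sum_congr rfl fun T _ => ?_
        rw [mul_sum]
        exact sum_congr rfl fun i hi => by rw [insert_erase hi]
    _ = _ := by
        rw [this]
        refine sum_congr rfl fun S hS => ?_
        rw [mem_powersetCard_univ] at hS
        rw [← sum_mul, ← upAvg_mul hw, hS]; ring

/-- The down-up walk on level `k + 1` has second eigenvalue at most `1 - 1 / (k + 1)²`, stated as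
a bound for the norm of the up operator on functions of mean zero. The factors `d - k` and
`k + 1` account for the ratio of the total weights of the two levels. -/
def LevelBound (d : ℕ) (w : Finset E → ℝ) (k : ℕ) : Prop :=
  ∀ f : Finset E → ℝ, ∑ T ∈ powersetCard (k + 1) univ, w T * f T = 0 →
    ((d : ℝ) - k) * ∑ S ∈ powersetCard k univ, w S * upAvg d w f S ^ 2 ≤
      ((k : ℝ) + 1) * (1 - 1 / ((k : ℝ) + 1) ^ 2) *
        ∑ T ∈ powersetCard (k + 1) univ, w T * f T ^ 2

lemma upAvg_mean (hw : IsBalanced d w) (k : ℕ) (hk : k < d) (f : Finset E → ℝ)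
    (hf : ∑ T ∈ powersetCard (k + 1) univ, w T * f T = 0) :
    ∑ S ∈ powersetCard k univ, w S * upAvg d w f S = 0 := by
  have h := sum_upAvg_mul hw k f (fun _ => 1)
  have hd : (0 : ℝ) < (d : ℝ) - k := by
    have : (k : ℝ) < d := by exact_mod_cast hk
    linarith
  have e : ∑ T ∈ powersetCard (k + 1) univ, w T * f T * ∑ i ∈ T, (1 : ℝ) =
      (k + 1 : ℕ) * ∑ T ∈ powersetCard (k + 1) univ, w T * f T := by
    rw [mul_sum]
    refine sum_congr rfl fun T hT => ?_
    rw [mem_powersetCard_univ] at hT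
    simp [hT]; ring
  rw [e, hf, mul_zero] at h
  simpa using (mul_eq_zero.mp h).resolve_left hd.ne'

lemma levelBound_zero (hw : IsBalanced d w) (hd : 0 < d) : LevelBound d w 0 := by
  intro f hf
  have := upAvg_mean hw 0 hd f hf
  simp only [powersetCard_zero, sum_singleton] at this ⊢
  rw [pow_two, ← mul_assoc (w ∅), this]; simp

/-- The inductive step of Alev and Lau, for local bounds `1 / (k + 2)` on level `k`. -/
lemma levelBound_succ (hw : IsBalanced d w) {k : ℕ} (hk : k + 2 ≤ d)
    (hloc : ∀ S : Finset E, S.card = k → LocalBound d w S (1 / ((k : ℝ) + 2)))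
    (ih : LevelBound d w k) : LevelBound d w (k + 1) := by
  intro f hf
  set g := upAvg d w f with hg
  have hg0 := upAvg_mean hw (k + 1) (by omega) f hf
  have hk' : (k : ℝ) + 2 ≤ d := by exact_mod_cast hk
  set c := (d : ℝ) - k - 1 with hc
  have hc0 : 0 < c := by linarith
  set N := ∑ S ∈ powersetCard (k + 1) univ, w S * g S ^ 2 with hN
  set F := ∑ T ∈ powersetCard (k + 1 + 1) univ, w T * f T ^ 2 with hF
  set h : Finset E → ℝ := fun T => ∑ i ∈ T, g (T.erase i) with hh
  have hX : c * N = ∑ T ∈ powersetCard (k + 1 + 1) univ, w T * f T * h T := by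
    rw [← sum_upAvg_mul hw (k + 1) f g, hN, hc]
    push_cast
    rw [sub_sub]; congr! 2; ring
  have hdiag : ∑ T ∈ powersetCard (k + 1 + 1) univ, ∑ i ∈ T, w T * g (T.erase i) ^ 2 = c * N := by
    have := sum_level_succ (E := E) (k + 1) (fun S i => w (insert i S) * g S ^ 2)
    calc _ = ∑ T ∈ powersetCard (k + 1 + 1) univ, ∑ i ∈ T,
          w (insert i (T.erase i)) * g (T.erase i) ^ 2 := by
          refine sum_congr rfl fun T _ => sum_congr rfl fun i hi => by rw [insert_erase hi]
      _ = _ := by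
          rw [this, hN, mul_sum]
          refine sum_congr rfl fun S hS => ?_
          rw [mem_powersetCard_univ] at hS
          rw [← sum_mul, hw.sum_insert, hS, hc]; push_cast; ring
  -- Removing `i ≠ j` from `T` leaves `R` with `T = R ∪ {i, j}`, an edge of the link of `R`.
  have hoff : ∑ T ∈ powersetCard (k + 1 + 1) univ, ∑ i ∈ T, ∑ j ∈ T.erase i,
      w T * g (T.erase i) * g (T.erase j) =
      ∑ R ∈ powersetCard k univ, ∑ i, ∑ j,
        linkEdge w R i j * g (insert i R) * g (insert j R) := by
    have h1 := sum_level_succ (E := E) (k + 1) (fun S i => ∑ j ∈ S,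
      w (insert i S) * g S * g (insert i (S.erase j)))
    have h2 := sum_level_succ (E := E) k (fun R j => ∑ i ∈ (insert j R)ᶜ,
      w (insert i (insert j R)) * g (insert j R) * g (insert i R))
    calc _ = ∑ T ∈ powersetCard (k + 1 + 1) univ, ∑ i ∈ T, ∑ j ∈ T.erase i,
          w (insert i (T.erase i)) * g (T.erase i) * g (insert i ((T.erase i).erase j)) := by
          refine sum_congr rfl fun T _ => sum_congr rfl fun i hi => sum_congr rfl fun j hj => ?_
          have : insert i ((T.erase i).erase j) = T.erase j := by
            rw [erase_right_comm, insert_erase]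
            exact mem_erase.mpr ⟨(ne_of_mem_erase hj).symm, hi⟩
          rw [insert_erase hi, this]
      _ = ∑ S ∈ powersetCard (k + 1) univ, ∑ j ∈ S, ∑ i ∈ (insert j (S.erase j))ᶜ,
          w (insert i (insert j (S.erase j))) * g (insert j (S.erase j)) *
            g (insert i (S.erase j)) := by
          rw [h1]
          refine sum_congr rfl fun S _ => ?_
          rw [sum_comm]
          refine sum_congr rfl fun j hj => ?_
          rw [insert_erase hj]
      _ = _ := by
          rw [h2]
          refine sum_congr rfl fun R _ => ?_
          rw [← sum_subset (subset_univ Rᶜ)]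
          · refine sum_congr rfl fun j hj => ?_
            have hj' := mem_compl.mp hj
            simp only [linkEdge, hj', if_false, mul_assoc]
            rw [sum_linkVert_mul (insert j R)]
          · intro i _ hi
            rw [mem_compl, not_not] at hi
            simp [linkEdge, hi]
  have hsplit : ∑ T ∈ powersetCard (k + 1 + 1) univ, w T * h T ^ 2 = c * N +
      ∑ R ∈ powersetCard k univ, ∑ i, ∑ j,
        linkEdge w R i j * g (insert i R) * g (insert j R) := by
    rw [← hdiag, ← hoff, ← sum_add_distrib]
    refine sum_congr rfl fun T _ => ?_
    rw [← sum_add_distrib, hh, pow_two, sum_mul_sum, mul_sum]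
    refine sum_congr rfl fun i hi => ?_
    rw [← add_sum_erase T _ hi, mul_add, mul_sum]
    congr 1
    · ring
    · congr! 1; ring
  have hvert : ∑ R ∈ powersetCard k univ, ∑ i, linkVert w R i * g (insert i R) ^ 2 =
      ((k : ℝ) + 1) * N := by
    have h1 := sum_level_succ (E := E) k (fun R i => w (insert i R) * g (insert i R) ^ 2)
    simp only [sum_linkVert_mul]
    rw [← h1, hN, mul_sum]
    refine sum_congr rfl fun S hS => ?_
    rw [mem_powersetCard_univ] at hS
    rw [sum_congr rfl fun i hi => by rw [insert_erase hi]]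
    simp [hS]
  have hlocal : ∑ R ∈ powersetCard k univ, ∑ i, ∑ j,
        linkEdge w R i j * g (insert i R) * g (insert j R) ≤
      c * (1 / ((k : ℝ) + 2) * (((k : ℝ) + 1) * N) + (1 - 1 / ((k : ℝ) + 2)) *
        (((d : ℝ) - k) * ∑ R ∈ powersetCard k univ, w R * upAvg d w g R ^ 2)) := by
    rw [← hvert, mul_sum, mul_sum, mul_sum, ← sum_add_distrib, mul_sum]
    refine sum_le_sum fun R hR => ?_
    rw [mem_powersetCard_univ] at hR
    have := (hloc R hR).general hw (fun i => g (insert i R))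
    rw [hR] at this
    refine this.trans (le_of_eq ?_)
    rw [sum_linkVert_mul R (fun i => g (insert i R)), upAvg, hR]
    ring
  have hih := ih g hg0
  have hk1 : (0 : ℝ) < (k : ℝ) + 1 := by positivity
  have hk2 : (0 : ℝ) < (k : ℝ) + 2 := by positivity
  set θ := ((k : ℝ) + 2) * (1 - 1 / ((k : ℝ) + 2) ^ 2) with hθ
  have hγ : 0 ≤ 1 - 1 / ((k : ℝ) + 2) := by
    rw [sub_nonneg, div_le_one hk2]; linarith
  have hh2 : ∑ T ∈ powersetCard (k + 1 + 1) univ, w T * h T ^ 2 ≤ θ * (c * N) := by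
    rw [hsplit]
    have := mul_le_mul_of_nonneg_left (mul_le_mul_of_nonneg_left hih hγ) hc0.le
    have e : θ * (c * N) = c * N + (c * (1 / ((k : ℝ) + 2) * (((k : ℝ) + 1) * N)) +
        c * ((1 - 1 / ((k : ℝ) + 2)) *
          (((k : ℝ) + 1) * (1 - 1 / ((k : ℝ) + 1) ^ 2) * N))) := by
      rw [hθ]; field_simp; ring
    rw [e]
    linarith
  -- Cauchy–Schwarz passes from the down operator to its adjoint.
  have hCS : (c * N) ^ 2 ≤ F * ∑ T ∈ powersetCard (k + 1 + 1) univ, w T * h T ^ 2 := by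
    rw [hX]
    refine sum_sq_le_sum_mul_sum_of_sq_le_mul _ (fun T _ => mul_nonneg (hw.nonneg T) (sq_nonneg _))
      (fun T _ => mul_nonneg (hw.nonneg T) (sq_nonneg _)) (fun T _ => le_of_eq (by ring))
  have hF0 : 0 ≤ F := sum_nonneg fun T _ => mul_nonneg (hw.nonneg T) (sq_nonneg _)
  have hN0 : 0 ≤ N := sum_nonneg fun T _ => mul_nonneg (hw.nonneg T) (sq_nonneg _)
  have hθ0 : 0 ≤ θ := by
    refine mul_nonneg hk2.le ?_
    rw [sub_nonneg, div_le_one (by positivity)]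
    nlinarith [(Nat.cast_nonneg k : (0 : ℝ) ≤ k)]
  have hfin : c * N ≤ θ * F := by
    rcases (mul_nonneg hc0.le hN0).eq_or_lt with h0 | h0
    · rw [← h0]; positivity
    · have := hCS.trans (mul_le_mul_of_nonneg_left hh2 hF0)
      nlinarith
  have ek : ((k + 1 : ℕ) : ℝ) + 1 = k + 2 := by push_cast; ring
  rw [ek]
  have ec : (d : ℝ) - (k + 1 : ℕ) = c := by push_cast; ring
  rw [ec]
  exact hfin

end weights

/-! ### The walks of a weighted complex -/

section complex
variable {C : Finset (Finset E)} {d : ℕ} {pid : Finset E → ℝ}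

lemma wgt_nonneg (hpid : IsTopDist C d pid) (S : Finset E) : 0 ≤ wgt C d pid S :=
  sum_nonneg fun T hT => (hpid.1 T (mem_filter.mp hT).1).le

lemma wgt_pos (hC : IsPureComplex C d) (hpid : IsTopDist C d pid) {S : Finset E} (hS : S ∈ C) :
    0 < wgt C d pid S := by
  obtain ⟨T, hT, hST, hcard⟩ := hC.2.2 S hS
  refine sum_pos (fun T hT => hpid.1 T (mem_filter.mp hT).1) ⟨T, ?_⟩
  simp [faces, hT, hST, hcard]

lemma wgt_eq_zero (hC : IsPureComplex C d) {S : Finset E} (hS : S ∉ C) :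
    wgt C d pid S = 0 := by
  refine sum_eq_zero fun T hT => ?_
  simp only [faces, mem_filter] at hT
  exact absurd (hC.2.1 T hT.1.1 S hT.2) hS

lemma wgt_balanced (hpid : IsTopDist C d pid) :
    IsBalanced d (wgt C d pid) := by
  refine ⟨wgt_nonneg hpid, fun S => ?_⟩
  simp only [wgt, sum_filter]
  rw [sum_comm, mul_sum]
  refine sum_congr rfl fun T hT => ?_
  have hTd : T.card = d := (mem_filter.mp hT).2
  by_cases hST : S ⊆ T
  · have e : Sᶜ.filter (fun i => insert i S ⊆ T) = T \ S := by
      ext i; simp only [mem_filter, mem_compl, insert_subset_iff, mem_sdiff]; tauto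
    rw [← sum_filter, e, sum_const, card_sdiff_of_subset hST, nsmul_eq_mul,
      Nat.cast_sub (card_le_card hST), hTd, if_pos hST]
  · rw [if_neg hST, mul_zero]
    refine sum_eq_zero fun i _ => if_neg fun h => hST ((subset_insert i S).trans h)

lemma sum_linkFaces_pos (hC : IsPureComplex C d) (hpid : IsTopDist C d pid) {S : Finset E}
    (hS : S ∈ C) {k : ℕ} (hk : S.card + k ≤ d) :
    0 < ∑ T ∈ linkFaces C S k, wgt C d pid (S ∪ T) := by
  obtain ⟨T, hT, hST, hcard⟩ := hC.2.2 S hS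
  obtain ⟨R, hR, hRk⟩ := exists_subset_card_eq (s := T \ S) (n := k)
    (by rw [card_sdiff_of_subset hST]; omega)
  refine sum_pos (fun T hT => ?_) ⟨R, ?_⟩
  · simp only [linkFaces, mem_filter] at hT
    exact wgt_pos hC hpid hT.2.2.1
  · simp only [linkFaces, mem_filter]
    refine ⟨by simp, ?_, ?_, hRk⟩
    · rw [← disjoint_iff_inter_eq_empty]
      exact disjoint_sdiff.mono_right hR
    · exact hC.2.1 T hT _ (union_subset hST (hR.trans sdiff_subset))

lemma sum_faces_pos (hC : IsPureComplex C d) (hpid : IsTopDist C d pid) {k : ℕ} (hk : k ≤ d) :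
    0 < ∑ T ∈ faces C k, wgt C d pid T := by
  obtain ⟨S, hS⟩ := hC.1
  obtain ⟨T, hT, hST, hcard⟩ := hC.2.2 S hS
  obtain ⟨R, hR, hRk⟩ := exists_subset_card_eq (s := T) (n := k) (by omega)
  refine sum_pos (fun T hT => wgt_pos hC hpid (mem_filter.mp hT).1) ⟨R, ?_⟩
  exact mem_filter.mpr ⟨hC.2.1 T hT R hR, hRk⟩

lemma linkPi_eq (hC : IsPureComplex C d) (hpid : IsTopDist C d pid) {S : Finset E}
    {k : ℕ} (hk : S.card + k ≤ d) {T : Finset E} (hT : T ∈ linkFaces C S k) :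
    linkPi C d pid S k T =
      (∑ T' ∈ linkFaces C S k, wgt C d pid (S ∪ T'))⁻¹ * wgt C d pid (S ∪ T) := by
  have hmem : ∀ R ∈ linkFaces C S k, S ∪ R ∈ faces C (S.card + k) := fun R hR => by
    simp only [linkFaces, mem_filter] at hR
    refine mem_filter.mpr ⟨hR.2.2.1, ?_⟩
    rw [card_union_of_disjoint (disjoint_iff_inter_eq_empty.mpr hR.2.1), hR.2.2.2]
  have hZ := sum_faces_pos hC hpid hk
  rw [linkPi, if_pos hT, sum_congr rfl fun R hR => by rw [piLev, if_pos (hmem R hR)],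
    piLev, if_pos (hmem T hT), ← sum_div, div_div_div_cancel_right₀ hZ.ne', div_eq_inv_mul]

/-- `upWith` depends only on the measure up to scaling. -/
lemma upWith_eq {ν v : Finset E → ℝ} {dom : Finset (Finset E)} {a : ℝ} (ha : a ≠ 0)
    (h : ∀ T ∈ dom, ν T = a * v T) (f : Finset E → ℝ) (R : Finset E) :
    upWith ν dom f R = (∑ T ∈ dom.filter (fun T => R ⊆ T), v T * f T) /
      ∑ T ∈ dom.filter (fun T => R ⊆ T), v T := by
  rw [upWith, sum_congr rfl fun T hT => h T (mem_filter.mp hT).1, ← mul_sum, sum_div]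
  refine sum_congr rfl fun T hT => ?_
  rw [h T (mem_filter.mp hT).1, mul_div_mul_left _ _ ha, div_mul_eq_mul_div]

lemma sum_linkFaces_one (hC : IsPureComplex C d) (S : Finset E) (F : Finset E → ℝ) :
    ∑ T ∈ linkFaces C S 1, wgt C d pid (S ∪ T) * F T =
      ∑ i, linkVert (wgt C d pid) S i * F {i} := by
  symm
  rw [← sum_filter_of_ne (p := fun i => i ∉ S ∧ insert i S ∈ C)]
  · refine sum_bij (fun i _ => {i}) ?_ ?_ ?_ ?_
    · intro i hi
      simp only [mem_filter, mem_univ, true_and] at hi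
      simp [linkFaces, hi.1, union_comm S, hi.2]
    · intro i _ j _ h
      simpa using h
    · intro T hT
      simp only [linkFaces, mem_filter, card_eq_one] at hT
      obtain ⟨_, h1, h2, i, rfl⟩ := hT
      refine ⟨i, ?_, rfl⟩
      rw [union_comm, ← insert_eq] at h2
      simp only [mem_filter, mem_univ, true_and]
      exact ⟨fun h => by simp [h] at h1, h2⟩
    · intro i hi
      simp only [mem_filter, mem_univ, true_and] at hi
      rw [linkVert, if_neg hi.1, insert_eq, union_comm]
  · intro i _ h
    by_contra h'
    apply h
    unfold linkVert
    split_ifs with h1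
    · simp
    · rw [wgt_eq_zero hC fun h2 => h' ⟨h1, h2⟩, zero_mul]

lemma sum_linkFaces_two (hC : IsPureComplex C d) (S : Finset E) {i : E} (hi : i ∉ S)
    (F : Finset E → ℝ) :
    ∑ T ∈ (linkFaces C S 2).filter (fun T => {i} ⊆ T), wgt C d pid (S ∪ T) * F T =
      ∑ j, linkEdge (wgt C d pid) S i j * F {i, j} := by
  symm
  have hu : ∀ j, insert i (insert j S) = S ∪ {i, j} := fun j => by
    ext; simp only [mem_insert, mem_union, mem_singleton]; tauto
  rw [← sum_filter_of_ne (p := fun j => j ∉ S ∧ i ≠ j ∧ S ∪ {i, j} ∈ C)]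
  · refine sum_bij (fun j _ => {i, j}) ?_ ?_ ?_ ?_
    · intro j hj
      simp only [mem_filter, mem_univ, true_and] at hj
      simp only [linkFaces, mem_filter, hj.2.2, card_pair hj.2.1]
      refine ⟨⟨by simp, ?_, trivial, trivial⟩, by simp⟩
      rw [← disjoint_iff_inter_eq_empty]
      simp [hi, hj.1]
    · intro j hj l hl h
      simp only [mem_filter, mem_univ, true_and] at hj hl
      have : j ∈ ({i, l} : Finset E) := h ▸ by simp
      simp only [mem_insert, mem_singleton] at this
      exact this.resolve_left hj.2.1.symm
    · intro T hT
      simp only [linkFaces, mem_filter, singleton_subset_iff] at hT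
      obtain ⟨⟨_, h1, h2, h3⟩, hiT⟩ := hT
      obtain ⟨j, hj⟩ := card_eq_one.mp (show (T.erase i).card = 1 by
        rw [card_erase_of_mem hiT, h3])
      have hT : {i, j} = T := by rw [← insert_erase hiT, hj]
      have hij : j ∈ T.erase i := by simp [hj]
      refine ⟨j, ?_, hT⟩
      simp only [mem_filter, mem_univ, true_and, hT]
      refine ⟨fun h => ?_, (ne_of_mem_erase hij).symm, h2⟩
      have : j ∈ S ∩ T := mem_inter.mpr ⟨h, mem_of_mem_erase hij⟩
      simp [h1] at this
    · intro j hj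
      simp only [mem_filter, mem_univ, true_and] at hj
      rw [linkEdge_eq, if_neg (by tauto), hu]
  · intro j _ h
    by_contra h'
    apply h
    rw [linkEdge_eq]
    split_ifs with h1
    · simp
    · rw [hu, wgt_eq_zero hC fun h2 => h' ⟨by tauto, by tauto, h2⟩, zero_mul]

/-- The local walk moves from `i` to `j` with probability proportional to the weight of the edge
`{i, j}`; the laziness of the up-down walk cancels. -/
lemma localWalk_apply (hC : IsPureComplex C d) (hpid : IsTopDist C d pid) {S : Finset E}
    (hS : S ∈ C) (hd : S.card + 2 ≤ d) (f : Finset E → ℝ) {i : E}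
    (hi : linkVert (wgt C d pid) S i ≠ 0) :
    localWalk C d pid S f {i} = (∑ j, linkEdge (wgt C d pid) S i j * f {j}) /
      (((d : ℝ) - S.card - 1) * linkVert (wgt C d pid) S i) := by
  have hw := wgt_balanced hpid
  have hiS : i ∉ S := fun h => hi (by simp [linkVert, h])
  have hd' : (S.card : ℝ) + 2 ≤ d := by exact_mod_cast hd
  have hc : (d : ℝ) - S.card - 1 ≠ 0 := by linarith
  have hone := sum_linkFaces_two (pid := pid) hC S hiS (fun _ => 1)
  simp only [mul_one] at hone
  have hdown : ∀ j, linkEdge (wgt C d pid) S i j * downOp (1 + 1) f {i, j} =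
      (linkEdge (wgt C d pid) S i j * f {j} + linkEdge (wgt C d pid) S i j * f {i}) / 2 := by
    intro j
    by_cases hij : i = j
    · simp [linkEdge_eq, hij]
    · have e1 : ({i, j} : Finset E).erase i = {j} := by
        ext x; simp only [mem_erase, mem_insert, mem_singleton]; aesop
      have e2 : ({i, j} : Finset E).erase j = {i} := by
        ext x; simp only [mem_erase, mem_insert, mem_singleton]; aesop
      rw [downOp, sum_pair hij, e1, e2]; push_cast; ring
  rw [localWalk, linkUpDown, linkUp,
    upWith_eq (inv_ne_zero (sum_linkFaces_pos hC hpid hS hd).ne')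
      (fun T hT => linkPi_eq hC hpid hd hT),
    sum_linkFaces_two hC S hiS, hone, sum_congr rfl fun j _ => hdown j, ← sum_div,
    sum_add_distrib, ← sum_mul, sum_linkEdge hw]
  field_simp
  ring

lemma sum_linkPi_mul (hC : IsPureComplex C d) (hpid : IsTopDist C d pid) {S : Finset E}
    (hd : S.card + 2 ≤ d) (F : Finset E → ℝ) :
    ∑ T ∈ linkFaces C S 1, linkPi C d pid S 1 T * F T =
      (∑ T' ∈ linkFaces C S 1, wgt C d pid (S ∪ T'))⁻¹ *
        ∑ i, linkVert (wgt C d pid) S i * F {i} := by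
  rw [← sum_linkFaces_one hC, mul_sum]
  refine sum_congr rfl fun T hT => ?_
  rw [linkPi_eq hC hpid (by omega) hT, mul_assoc]

lemma sum_linkVert_localWalk (hC : IsPureComplex C d) (hpid : IsTopDist C d pid) {S : Finset E}
    (hS : S ∈ C) (hd : S.card + 2 ≤ d) (f : Finset E → ℝ) :
    ∑ i, linkVert (wgt C d pid) S i * (f {i} * localWalk C d pid S f {i}) =
      (∑ i, ∑ j, linkEdge (wgt C d pid) S i j * f {i} * f {j}) / ((d : ℝ) - S.card - 1) := by
  have hw := wgt_balanced hpid
  have hd' : (S.card : ℝ) + 2 ≤ d := by exact_mod_cast hd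
  have hc : (d : ℝ) - S.card - 1 ≠ 0 := by linarith
  rw [sum_div]
  refine sum_congr rfl fun i _ => ?_
  have e : ∑ j, linkEdge (wgt C d pid) S i j * f {i} * f {j} =
      f {i} * ∑ j, linkEdge (wgt C d pid) S i j * f {j} := by
    rw [mul_sum]; congr! 1; ring
  rw [e]
  by_cases hi : linkVert (wgt C d pid) S i = 0
  · have hs := sum_linkEdge hw S i
    rw [hi, mul_zero, sum_eq_zero_iff_of_nonneg fun j _ => linkEdge_nonneg hw S i j] at hs
    rw [hi, sum_eq_zero fun j hj => by rw [hs j hj, zero_mul]]; simp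
  · rw [localWalk_apply hC hpid hS hd f hi]
    field_simp

/-- The local walk is a Markov operator, hence bounded by `1`. -/
lemma localBound_one {w : Finset E → ℝ} (hw : IsBalanced d w) (S : Finset E) :
    LocalBound d w S 1 := by
  intro f _
  have h0 : 0 ≤ ∑ i, ∑ j, linkEdge w S i j * (f i - f j) ^ 2 :=
    sum_nonneg fun i _ => sum_nonneg fun j _ => mul_nonneg (linkEdge_nonneg hw S i j) (sq_nonneg _)
  have e1 : ∑ i, ∑ j, linkEdge w S i j * f i ^ 2 =
      ((d : ℝ) - S.card - 1) * ∑ i, linkVert w S i * f i ^ 2 := by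
    simp only [← sum_mul, sum_linkEdge hw, mul_assoc, ← mul_sum]
  have e2 : ∑ i, ∑ j, linkEdge w S i j * f j ^ 2 =
      ((d : ℝ) - S.card - 1) * ∑ i, linkVert w S i * f i ^ 2 := by
    rw [← e1, sum_comm]; congr! 2; rw [linkEdge_symm]
  have e3 : ∑ i, ∑ j, linkEdge w S i j * (f i - f j) ^ 2 =
      ∑ i, ∑ j, linkEdge w S i j * f i ^ 2 + ∑ i, ∑ j, linkEdge w S i j * f j ^ 2 -
        2 * ∑ i, ∑ j, linkEdge w S i j * f i * f j := by
    simp only [mul_sum, ← sum_add_distrib, ← sum_sub_distrib]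
    congr! 2; ring
  rw [e3, e1, e2] at h0
  linarith

lemma LocalBound.mono {w : Finset E → ℝ} (hw : IsBalanced d w) {S : Finset E}
    (hd : S.card + 1 ≤ d) {γ γ' : ℝ} (h : LocalBound d w S γ) (hγ : γ ≤ γ') :
    LocalBound d w S γ' := by
  intro f hf
  have hd' : (S.card : ℝ) + 1 ≤ d := by exact_mod_cast hd
  refine (h f hf).trans (mul_le_mul_of_nonneg_left (mul_le_mul_of_nonneg_right hγ ?_)
    (by linarith))
  exact sum_nonneg fun i _ => mul_nonneg (linkVert_nonneg hw S i) (sq_nonneg _)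

/-- `lamTwo` of the local walk is a genuine upper bound for its Rayleigh quotients: the
set of quotients is bounded by `localBound_one`, so its supremum carries no junk value. -/
lemma localBound_lamTwo (hC : IsPureComplex C d) (hpid : IsTopDist C d pid) {S : Finset E}
    (hS : S ∈ C) (hd : S.card + 2 ≤ d) :
    LocalBound d (wgt C d pid) S
      (lamTwo (linkPi C d pid S 1) (linkFaces C S 1) (localWalk C d pid S)) := by
  have hw := wgt_balanced hpid
  have hd' : (S.card : ℝ) + 2 ≤ d := by exact_mod_cast hd
  have hc : 0 < (d : ℝ) - S.card - 1 := by linarith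
  set c := (d : ℝ) - S.card - 1 with hcdef
  have hA := inv_ne_zero (sum_linkFaces_pos hC hpid hS (k := 1) (by omega)).ne'
  have hn0 : ∀ f : E → ℝ, 0 ≤ ∑ i, linkVert (wgt C d pid) S i * f i ^ 2 := fun f =>
    sum_nonneg fun i _ => mul_nonneg (linkVert_nonneg hw S i) (sq_nonneg _)
  have hray : ∀ f : Finset E → ℝ,
      (∑ x ∈ linkFaces C S 1, linkPi C d pid S 1 x * f x * localWalk C d pid S f x) /
        ∑ x ∈ linkFaces C S 1, linkPi C d pid S 1 x * f x ^ 2 =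
      (∑ i, ∑ j, linkEdge (wgt C d pid) S i j * f {i} * f {j}) /
        (c * ∑ i, linkVert (wgt C d pid) S i * f {i} ^ 2) := by
    intro f
    simp only [mul_assoc (linkPi C d pid S 1 _)]
    rw [sum_linkPi_mul hC hpid hd (fun x => f x * localWalk C d pid S f x),
      sum_linkPi_mul hC hpid hd (fun x => f x ^ 2), mul_div_mul_left _ _ hA,
      sum_linkVert_localWalk hC hpid hS hd, div_div]
  intro φ hφ
  rcases (hn0 φ).eq_or_lt with h0 | h0
  · have := localBound_one hw S φ hφ
    rw [← h0] at this ⊢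
    simpa using this
  -- Extend `φ` from vertices to a function on sets agreeing with it on singletons.
  set f : Finset E → ℝ := fun T => ∑ i ∈ T, φ i with hf
  have hfφ : ∀ i, f {i} = φ i := fun i => by simp [hf]
  have hr := hray f
  simp only [hfφ] at hr
  have hle : (∑ i, ∑ j, linkEdge (wgt C d pid) S i j * φ i * φ j) /
      (c * ∑ i, linkVert (wgt C d pid) S i * φ i ^ 2) ≤
      lamTwo (linkPi C d pid S 1) (linkFaces C S 1) (localWalk C d pid S) := by
    refine le_csSup ⟨1, ?_⟩ ⟨f, ?_, ?_, hr.symm⟩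
    · rintro r ⟨g, hg, hg0, rfl⟩
      rw [hray]
      rw [sum_linkPi_mul hC hpid hd, mul_eq_zero] at hg
      refine div_le_one_of_le₀ ?_ (mul_nonneg hc.le (hn0 _))
      simpa using localBound_one hw S (fun i => g {i}) (hg.resolve_left hA)
    · rw [sum_linkPi_mul hC hpid hd]
      simp only [hfφ, hφ, mul_zero]
    · rw [sum_linkPi_mul hC hpid hd (fun x => f x ^ 2)]
      simp only [hfφ]
      exact mul_ne_zero hA h0.ne'
  rw [div_le_iff₀ (mul_pos hc h0)] at hle
  linarith

lemma localBound_of_not_mem (hC : IsPureComplex C d) {S : Finset E} (hS : S ∉ C) (γ : ℝ) :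
    LocalBound d (wgt C d pid) S γ := by
  have hv : ∀ R : Finset E, S ⊆ R → ∀ i, linkVert (wgt C d pid) R i = 0 := fun R hR i => by
    unfold linkVert
    split_ifs
    · rfl
    · exact wgt_eq_zero hC fun h => hS (hC.2.1 _ h _ (hR.trans (subset_insert i R)))
  intro f _
  have he : ∀ i j, linkEdge (wgt C d pid) S i j = 0 := fun i j => by
    unfold linkEdge
    split_ifs
    · rfl
    · exact hv _ (subset_insert i S) j
  simp [he, hv S subset_rfl]

/-- `λ₂(G_S) ≤ 1 / (|S| + 2)`, by descending induction on `|S|`, starting from `|S| = d - 2`. -/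
lemma localBound_all (hC : IsPureComplex C d) (hpid : IsTopDist C d pid)
    (htop : ∀ T ∈ faces C (d-2),
      lamTwo (linkPi C d pid T 1) (linkFaces C T 1) (localWalk C d pid T) ≤ 1 / (d : ℝ))
    (hconn : ∀ S ∈ C, S.card ≤ d - 2 →
      lamTwo (linkPi C d pid S 1) (linkFaces C S 1) (localWalk C d pid S) < 1)
    (n : ℕ) : ∀ S : Finset E, S.card + 2 + n = d →
      LocalBound d (wgt C d pid) S (1 / ((S.card : ℝ) + 2)) := by
  have hw := wgt_balanced hpid
  induction n with
  | zero =>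
    intro S hn
    by_cases hS : S ∈ C
    · refine (localBound_lamTwo hC hpid hS (by omega)).mono hw (by omega) ?_
      have hd : (d : ℝ) = S.card + 2 := by rw [← hn]; push_cast; ring
      rw [← hd]
      exact htop S (mem_filter.mpr ⟨hS, by omega⟩)
    · exact localBound_of_not_mem hC hS _
  | succ n ih =>
    intro S hn
    by_cases hS : S ∈ C
    · have hpos : (0 : ℝ) ≤ S.card := Nat.cast_nonneg _
      have h := LocalBound.trickle hw (S := S) (γ := 1 / ((S.card : ℝ) + 3)) (by omega)
        (by positivity) (by rw [div_lt_one (by positivity)]; linarith)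
        (fun a ha => by
          have hc := card_insert_of_notMem ha
          have := ih (insert a S) (by omega)
          rw [hc] at this
          convert this using 2
          push_cast; ring)
        (hconn S hS (by omega)) (localBound_lamTwo hC hpid hS (by omega))
      convert h using 1
      have e : 1 - 1 / ((S.card : ℝ) + 3) = ((S.card : ℝ) + 2) / ((S.card : ℝ) + 3) := by
        field_simp; ring
      rw [e]
      field_simp
    · exact localBound_of_not_mem hC hS _

lemma levelBound_all (hC : IsPureComplex C d) (hpid : IsTopDist C d pid)
    (htop : ∀ T ∈ faces C (d-2),
      lamTwo (linkPi C d pid T 1) (linkFaces C T 1) (localWalk C d pid T) ≤ 1 / (d : ℝ))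
    (hconn : ∀ S ∈ C, S.card ≤ d - 2 →
      lamTwo (linkPi C d pid S 1) (linkFaces C S 1) (localWalk C d pid S) < 1)
    (k : ℕ) (hk : k + 1 ≤ d) : LevelBound d (wgt C d pid) k := by
  induction k with
  | zero => exact levelBound_zero (wgt_balanced hpid) hk
  | succ k ih =>
    refine levelBound_succ (wgt_balanced hpid) hk (fun S hS => ?_) (ih (by omega))
    have := localBound_all hC hpid htop hconn (d - (k + 2)) S (by omega)
    rwa [hS] at this

lemma sum_faces (hC : IsPureComplex C d) (k : ℕ) (F : Finset E → ℝ) :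
    ∑ T ∈ faces C k, wgt C d pid T * F T = ∑ T ∈ powersetCard k univ, wgt C d pid T * F T := by
  refine sum_subset (fun T hT => ?_) fun T hT hT' => ?_
  · exact mem_powersetCard_univ.mpr (mem_filter.mp hT).2
  · rw [wgt_eq_zero hC, zero_mul]
    exact fun h => hT' (mem_filter.mpr ⟨h, mem_powersetCard_univ.mp hT⟩)

lemma sum_faces_above (hC : IsPureComplex C d) {R : Finset E} {k : ℕ} (hR : R.card = k)
    (F : Finset E → ℝ) :
    ∑ T ∈ (faces C (k + 1)).filter (fun T => R ⊆ T), wgt C d pid T * F T =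
      ∑ i ∈ Rᶜ, wgt C d pid (insert i R) * F (insert i R) := by
  symm
  rw [← sum_filter_of_ne (p := fun i => insert i R ∈ C)]
  · refine sum_bij (fun i _ => insert i R) ?_ ?_ ?_ (fun _ _ => rfl)
    · intro i hi
      simp only [mem_filter, mem_compl] at hi
      simp [faces, hi.2, card_insert_of_notMem hi.1, hR]
    · intro i hi j _ h
      simp only [mem_filter, mem_compl] at hi
      have : i ∈ insert j R := h ▸ mem_insert_self i R
      exact (mem_insert.mp this).resolve_right hi.1
    · intro T hT
      simp only [faces, mem_filter] at hT
      obtain ⟨⟨hTC, hTk⟩, hRT⟩ := hT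
      obtain ⟨i, hi⟩ := card_eq_one.mp (show (T \ R).card = 1 by
        rw [card_sdiff_of_subset hRT]; omega)
      have hiT : i ∈ T \ R := by simp [hi]
      have hins : insert i R = T := by
        rw [insert_eq, ← hi, sdiff_union_of_subset hRT]
      exact ⟨i, by simp [hins, hTC, (mem_sdiff.mp hiT).2], hins⟩
  · intro i _ h
    by_contra h'
    exact h (by rw [wgt_eq_zero hC h', zero_mul])

lemma piLev_eq {k : ℕ} {T : Finset E} (hT : T ∈ faces C k) : piLev C d pid k T =
    (∑ T ∈ faces C k, wgt C d pid T)⁻¹ * wgt C d pid T := by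
  rw [piLev, if_pos hT, div_eq_inv_mul]

lemma upOp_eq (hC : IsPureComplex C d) (hpid : IsTopDist C d pid) {k : ℕ} (hk : k + 1 ≤ d)
    (f : Finset E → ℝ) {R : Finset E} (hR : R.card = k) :
    upOp C d pid k f R = upAvg d (wgt C d pid) f R := by
  have hone := sum_faces_above (pid := pid) hC hR (fun _ => 1)
  simp only [mul_one] at hone
  rw [upOp, upWith_eq (inv_ne_zero (sum_faces_pos hC hpid hk).ne') (fun T hT => piLev_eq hT),
    sum_faces_above hC hR, hone, (wgt_balanced hpid).sum_insert, upAvg]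

/-- `⟨f, P^∨ f⟩` is the squared norm of `P^↑ f`. -/
lemma sum_downUp (hC : IsPureComplex C d) (hpid : IsTopDist C d pid) {k : ℕ} (hk : k + 1 ≤ d)
    (f : Finset E → ℝ) :
    ∑ T ∈ powersetCard (k + 1) univ, wgt C d pid T * (f T * downUp C d pid (k + 1) f T) =
      ((d : ℝ) - k) * (∑ S ∈ powersetCard k univ,
        wgt C d pid S * upAvg d (wgt C d pid) f S ^ 2) / ((k : ℝ) + 1) := by
  have h := sum_upAvg_mul (wgt_balanced hpid) k f (upAvg d (wgt C d pid) f)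
  have e : ∑ S ∈ powersetCard k univ, wgt C d pid S * upAvg d (wgt C d pid) f S ^ 2 =
      ∑ S ∈ powersetCard k univ, wgt C d pid S * upAvg d (wgt C d pid) f S *
        upAvg d (wgt C d pid) f S := by congr! 1; ring
  rw [e, h, sum_div]
  refine sum_congr rfl fun T hT => ?_
  rw [mem_powersetCard_univ] at hT
  rw [downUp, downOp, Nat.add_sub_cancel,
    sum_congr rfl fun i hi => upOp_eq hC hpid hk f (R := T.erase i)
      (by rw [card_erase_of_mem hi, hT, Nat.add_sub_cancel])]
  push_cast
  ring

end complex

/-- If `λ₂(G_T) ≤ 1/d` for every `T ∈ C(d-2)` and `λ₂(G_S) < 1` for every face `S` with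
`|S| ≤ d-2`, then for `2 ≤ k ≤ d`, `λ₂(P_k^∨) ≤ 1 - 1/k²`. -/
theorem gap_one_over_k_sq {E : Type*} [Fintype E] [DecidableEq E]
    (C : Finset (Finset E)) (d : ℕ) (pid : Finset E → ℝ)
    (hC : IsPureComplex C d) (hpid : IsTopDist C d pid)
    (htop : ∀ T ∈ faces C (d-2),
      lamTwo (linkPi C d pid T 1) (linkFaces C T 1) (localWalk C d pid T) ≤ 1 / (d : ℝ))
    (hconn : ∀ S ∈ C, S.card ≤ d - 2 →
      lamTwo (linkPi C d pid S 1) (linkFaces C S 1) (localWalk C d pid S) < 1)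
    (k : ℕ) (hk2 : 2 ≤ k) (hkd : k ≤ d) :
    lamTwo (piLev C d pid k) (faces C k) (downUp C d pid k) ≤ 1 - 1 / (k : ℝ) ^ 2 := by
  obtain ⟨n, rfl⟩ : ∃ n, k = n + 1 := ⟨k - 1, by omega⟩
  have hn : (0 : ℝ) < (n : ℝ) + 1 := by positivity
  have hθ : 0 ≤ 1 - 1 / (((n + 1 : ℕ) : ℝ)) ^ 2 := by
    rw [sub_nonneg, div_le_one (by positivity)]
    push_cast
    nlinarith [(Nat.cast_nonneg n : (0 : ℝ) ≤ n)]
  have hA := inv_ne_zero (sum_faces_pos hC hpid hkd).ne'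
  have hpi : ∀ F : Finset E → ℝ, ∑ T ∈ faces C (n + 1), piLev C d pid (n + 1) T * F T =
      (∑ T ∈ faces C (n + 1), wgt C d pid T)⁻¹ *
        ∑ T ∈ powersetCard (n + 1) univ, wgt C d pid T * F T := fun F => by
    rw [← sum_faces hC, mul_sum]
    exact sum_congr rfl fun T hT => by rw [piLev_eq hT, mul_assoc]
  -- `Real.sSup_le` also covers an empty set of Rayleigh quotients, where `lamTwo` is `0`.
  refine Real.sSup_le ?_ hθ
  rintro r ⟨f, hf, -, rfl⟩
  simp only [mul_assoc (piLev C d pid (n + 1) _)]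
  rw [hpi, mul_eq_zero] at hf
  rw [hpi (fun T => f T * downUp C d pid (n + 1) f T), hpi (fun T => f T ^ 2),
    mul_div_mul_left _ _ hA, sum_downUp hC hpid hkd]
  have hlev := levelBound_all hC hpid htop hconn n hkd f (hf.resolve_left hA)
  have hF0 : 0 ≤ ∑ T ∈ powersetCard (n + 1) univ, wgt C d pid T * f T ^ 2 :=
    sum_nonneg fun T _ => mul_nonneg (wgt_nonneg hpid T) (sq_nonneg _)
  refine div_le_of_le_mul₀ hF0 hθ ?_
  rw [div_le_iff₀ hn]
  push_cast
  linarith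
end
end

section
/- Let (a_0, …, a_m) be an admissible spectral profile with −1 < a_j for all j. Define x_0 := 2/(1 − a_0) and x_k := ((1 + a_k)/(1 − a_k))·x_{k−1} + 1 for 1 ≤ k ≤ m. Then for every 0 ≤ k ≤ m, x_k ≥ (k + 2)/Π_{i=0}^{k} (1 − a_i). -/
/-!
Write `P_k = ∏_{i ≤ k} (1 - a_i) > 0` and `y_k = x_k P_k`, so that `y_0 = 2` and
`y_k = (1 + a_k) y_{k-1} + P_k`. Admissibility gives `P_k ≥ 1 - (k + 1) a_k` by induction
(`one_sub_mul_le_prod`). If `y_{k-1} ≥ k + 1`, then, since `1 + a_k > 0`,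
`y_k ≥ (1 + a_k) (k + 1) + 1 - (k + 1) a_k = k + 2`.
-/

/-- `(a_0, …, a_m)` is an admissible spectral profile: each `a_i < 1`, and
`a_{i-1} ≤ a_i / (1 - a_i)` for `1 ≤ i ≤ m`. -/
def IsAdmissible (m : ℕ) (a : ℕ → ℝ) : Prop :=
  (∀ i ≤ m, a i < 1) ∧ ∀ i, 1 ≤ i → i ≤ m → a (i-1) ≤ a i / (1 - a i)

/-- The sequence `x_k`: `x_0 = 2/(1 - a_0)` and `x_k = ((1+a_k)/(1-a_k)) x_{k-1} + 1`. -/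
noncomputable def xOf (a : ℕ → ℝ) : ℕ → ℝ
  | 0 => 2 / (1 - a 0)
  | k + 1 => ((1 + a (k+1)) / (1 - a (k+1))) * xOf a k + 1

theorem prod_one_sub_pos (m : ℕ) (a : ℕ → ℝ) (h : IsAdmissible m a) (k : ℕ) (hk : k ≤ m) :
    0 < ∏ i ∈ Finset.range (k + 1), (1 - a i) := by
  refine Finset.prod_pos fun i hi => ?_
  have := h.1 i (by have := Finset.mem_range.1 hi; omega)
  linarith

/-- In the inductive step, admissibility in the form `a_k (1 - a_{k+1}) ≤ a_{k+1}` turns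
`(1 - (k + 1) a_k) (1 - a_{k+1})` into at least `1 - (k + 2) a_{k+1}`. -/
theorem one_sub_mul_le_prod (m : ℕ) (a : ℕ → ℝ) (h : IsAdmissible m a) (k : ℕ) (hk : k ≤ m) :
    1 - ((k : ℝ) + 1) * a k ≤ ∏ i ∈ Finset.range (k + 1), (1 - a i) := by
  induction k with
  | zero => simp
  | succ k ih =>
    have hpos : 0 < 1 - a (k + 1) := by linarith [h.1 (k + 1) hk]
    have hadm := h.2 (k + 1) (by omega) hk
    rw [Nat.add_sub_cancel, le_div_iff₀ hpos] at hadm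
    have hmul := mul_le_mul_of_nonneg_right (ih (by omega)) hpos.le
    have hadm' := mul_le_mul_of_nonneg_left hadm (by positivity : (0 : ℝ) ≤ (k : ℝ) + 1)
    rw [Finset.prod_range_succ]
    push_cast
    linarith

/-- For an admissible spectral profile with `-1 < a_j` for all `j ≤ m`,
`x_k ≥ (k+2)/Π_{i=0}^k (1 - a_i)` for all `k ≤ m`. -/
theorem x_lower_bound (m : ℕ) (a : ℕ → ℝ) (h : IsAdmissible m a)
    (ha : ∀ j ≤ m, -1 < a j) :
    ∀ k ≤ m, xOf a k ≥ ((k : ℝ) + 2) / ∏ i ∈ Finset.range (k+1), (1 - a i) := by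
  intro k
  induction k with
  | zero =>
    intro _
    simp [xOf]
  | succ k ih =>
    intro hk
    have hQ := prod_one_sub_pos m a h k (by omega)
    have hP := one_sub_mul_le_prod m a h (k + 1) hk
    have h1 := h.1 (k + 1) hk
    have h2 := ha (k + 1) hk
    have hx := ih (by omega)
    rw [Finset.prod_range_succ] at hP ⊢
    set Q := ∏ i ∈ Finset.range (k + 1), (1 - a i)
    have hpos : 0 < 1 - a (k + 1) := by linarith
    rw [ge_iff_le, div_le_iff₀ hQ] at hx
    rw [ge_iff_le, div_le_iff₀ (mul_pos hQ hpos), xOf]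
    have key : ((1 + a (k + 1)) / (1 - a (k + 1)) * xOf a k + 1) * (Q * (1 - a (k + 1)))
        = (1 + a (k + 1)) * (xOf a k * Q) + Q * (1 - a (k + 1)) := by
      field_simp
    have hmul := mul_le_mul_of_nonneg_left hx (by linarith : 0 ≤ 1 + a (k + 1))
    rw [key]
    push_cast at hP ⊢
    linarith
end
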